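/- arXiv:2101.07346 — 5 statements merged into one kernel-verified Lean document; each statement's English description precedes it below -/
import Mathlib

section
/- The quartic F has multiplicity 4 at the point (a,b,c,d), i.e., it is a cone with vertex (a:b:c:d): for every multi-index (α₁,α₂,α₃,α₄) of non-negative integers with α₁+α₂+α₃+α₄ ≤ 3, the partial derivative ∂^{α₁+α₂+α₃+α₄}F/∂x^{α₁}∂y^{α₂}∂z^{α₃}∂w^{α₄}, evaluated at (x,y,z,w) = (a,b,c,d), is the zero polynomial in ℂ[a,b,c,d]. -/
open MvPolynomial

/-- The polynomial ring `ℂ[a,b,c,d][x,y,z,w]`: polynomials in the variables `x,y,z,w`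
with coefficients in `ℂ[a,b,c,d]`. -/
noncomputable abbrev B4Ring : Type := MvPolynomial (Fin 4) (MvPolynomial (Fin 4) ℂ)

noncomputable def a : B4Ring := C (X 0)
noncomputable def b : B4Ring := C (X 1)
noncomputable def c : B4Ring := C (X 2)
noncomputable def d : B4Ring := C (X 3)
noncomputable def x : B4Ring := X 0
noncomputable def y : B4Ring := X 1
noncomputable def z : B4Ring := X 2
noncomputable def w : B4Ring := X 3

set_option maxHeartbeats 1000000 in
/-- The equation of the unexpected cone of degree 4 associated to the `B₄` root system
(with general point `P = (a:b:c:d)`), as a polynomial in `x,y,z,w` with coefficients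
in `ℂ[a,b,c,d]`. -/
noncomputable def B4cone : B4Ring :=
    3*a*d*(c^2-b^2)*x^2*y*z + 3*b*d*(a^2-c^2)*x*y^2*z + 3*c*d*(b^2-a^2)*x*y*z^2
  + 3*a*c*(b^2-d^2)*x^2*y*w + 3*b*c*(d^2-a^2)*x*y^2*w + 3*d*c*(a^2-b^2)*x*y*w^2
  + 3*a*b*(d^2-c^2)*x^2*z*w + 3*c*b*(a^2-d^2)*x*z^2*w + 3*d*b*(c^2-a^2)*x*z*w^2
  + 3*b*a*(c^2-d^2)*y^2*z*w + 3*c*a*(d^2-b^2)*y*z^2*w + 3*d*a*(b^2-c^2)*y*z*w^2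
  + c*d*(d^2-c^2)*x*y*(x^2-y^2) + b*d*(b^2-d^2)*x*z*(x^2-z^2) + b*c*(c^2-b^2)*x*w*(x^2-w^2)
  + a*d*(d^2-a^2)*y*z*(y^2-z^2) + a*c*(a^2-c^2)*y*w*(y^2-w^2) + a*b*(b^2-a^2)*z*w*(z^2-w^2)

/-!
Let `pᵢⱼ` be the `2 × 2` minors of the matrix with rows `P = (a, b, c, d)` and `(x, y, z, w)`.
The quartic is a form of degree four in these minors,
`F = p₀₁p₂₃(p₀₁² + p₂₃²) - p₀₂p₁₃(p₀₂² + p₁₃²) + p₀₃p₁₂(p₀₃² + p₁₂²)`,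
and each minor vanishes at `P`. Hence `F` lies in the fourth power of the ideal of `P`. A
derivation lowers the order of vanishing by at most one, so three derivatives of `F` still
vanish at `P`.
-/

section Derivation

variable {R A : Type*} [CommSemiring R] [CommSemiring A] [Algebra R A]

lemma derivation_mem_pow_sub_one (D : Derivation R A A) {I : Ideal A} {n : ℕ} {f : A}
    (hf : f ∈ I ^ n) : D f ∈ I ^ (n - 1) := by
  induction n generalizing f with
  | zero => simp
  | succ n ih =>
    rw [Nat.add_sub_cancel]
    rw [pow_succ'] at hf
    induction hf using Submodule.mul_induction_on' with
    | mem_mul_mem g hg h hh =>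
      have hgDh : g * D h ∈ I ^ n := by
        cases n with
        | zero => simp
        | succ m => exact pow_succ' I m ▸ Ideal.mul_mem_mul hg (ih hh)
      have hhDg : h * D g ∈ I ^ n := Ideal.mul_mem_right _ _ hh
      simpa only [D.leibniz, smul_eq_mul] using add_mem hgDh hhDg
    | add g _ h _ hDg hDh => simpa only [map_add] using add_mem hDg hDh

lemma iterate_derivation_mem_pow_sub (D : Derivation R A A) {I : Ideal A} {n : ℕ} {f : A}
    (hf : f ∈ I ^ n) (k : ℕ) : D^[k] f ∈ I ^ (n - k) := by
  induction k with
  | zero => exact hf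
  | succ k ih =>
    rw [Function.iterate_succ_apply', Nat.sub_add_eq]
    exact derivation_mem_pow_sub_one D ih

end Derivation

lemma mul_mul_sq_add_sq_mem_pow_four {A : Type*} [CommSemiring A] {I : Ideal A} {u v : A}
    (hu : u ∈ I) (hv : v ∈ I) : u * v * (u ^ 2 + v ^ 2) ∈ I ^ 4 := by
  have huv : u * v ∈ I ^ 2 := pow_two I ▸ Ideal.mul_mem_mul hu hv
  have hsq : u ^ 2 + v ^ 2 ∈ I ^ 2 :=
    add_mem (Ideal.pow_mem_pow hu 2) (Ideal.pow_mem_pow hv 2)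
  exact pow_add I 2 2 ▸ Ideal.mul_mem_mul huv hsq

section Point

variable {σ R : Type*}

/-- The ideal of polynomials vanishing at the point `p`. A polynomial has multiplicity at least
`n` at `p` when it lies in the `n`-th power of this ideal. -/
noncomputable def pointIdeal [CommSemiring R] (p : σ → R) : Ideal (MvPolynomial σ R) :=
  RingHom.ker (eval p)

/-- The Plücker coordinate `pᵢⱼ` of the line through the fixed point `p` and the generic point
`X`: the `2 × 2` minor on columns `i, j` of the matrix with rows `p` and `X`. -/
noncomputable def pluckerCoord [CommRing R] (p : σ → R) (i j : σ) : MvPolynomial σ R :=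
  C (p i) * X j - C (p j) * X i

lemma pluckerCoord_mem_pointIdeal [CommRing R] (p : σ → R) (i j : σ) :
    pluckerCoord p i j ∈ pointIdeal p := by
  simp [pointIdeal, pluckerCoord, RingHom.mem_ker, mul_comm]

end Point

lemma B4cone_eq_pluckerCoord :
    let p : Fin 4 → Fin 4 → B4Ring := pluckerCoord X
    B4cone = p 0 1 * p 2 3 * (p 0 1 ^ 2 + p 2 3 ^ 2)
      - p 0 2 * p 1 3 * (p 0 2 ^ 2 + p 1 3 ^ 2)
      + p 0 3 * p 1 2 * (p 0 3 ^ 2 + p 1 2 ^ 2) := by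
  simp only [B4cone, pluckerCoord, a, b, c, d, x, y, z, w]
  ring

lemma B4cone_mem_pointIdeal_pow_four : B4cone ∈ pointIdeal X ^ 4 := by
  have mem_pow_four (i j k l : Fin 4) :=
    mul_mul_sq_add_sq_mem_pow_four (pluckerCoord_mem_pointIdeal (X (R := ℂ)) i j)
      (pluckerCoord_mem_pointIdeal X k l)
  rw [B4cone_eq_pluckerCoord]
  exact add_mem (sub_mem (mem_pow_four 0 1 2 3) (mem_pow_four 0 2 1 3)) (mem_pow_four 0 3 1 2)

/-- The quartic `F` has multiplicity 4 at the point `(a,b,c,d)`: every partial derivative of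
order at most `3` in the variables `x,y,z,w`, evaluated at `(x,y,z,w) = (a,b,c,d)`, is the
zero polynomial in `ℂ[a,b,c,d]`. -/
theorem B4cone_multiplicity_four (α₁ α₂ α₃ α₄ : ℕ) (h : α₁ + α₂ + α₃ + α₄ ≤ 3) :
    MvPolynomial.eval (fun i => (X i : MvPolynomial (Fin 4) ℂ))
      ((⇑(pderiv (0 : Fin 4)))^[α₁] ((⇑(pderiv (1 : Fin 4)))^[α₂]
        ((⇑(pderiv (2 : Fin 4)))^[α₃] ((⇑(pderiv (3 : Fin 4)))^[α₄] B4cone)))) = 0 := by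
  have hF := B4cone_mem_pointIdeal_pow_four
  have h₃ := iterate_derivation_mem_pow_sub (pderiv 3) hF α₄
  have h₂ := iterate_derivation_mem_pow_sub (pderiv 2) h₃ α₃
  have h₁ := iterate_derivation_mem_pow_sub (pderiv 1) h₂ α₂
  have h₀ := iterate_derivation_mem_pow_sub (pderiv 0) h₁ α₁
  have order_ne_zero : 4 - α₄ - α₃ - α₂ - α₁ ≠ 0 := by lia
  exact Ideal.pow_le_self order_ne_zero h₀
end

section
/- A vector v ∈ ℂ⁴ satisfies m₀(v) = m₁(v) = ⋯ = m₁₁(v) = 0 if and only if v is a scalar multiple of one of the 24 vectors of the F₄ configuration: P₁=(1,0,0,0), P₂=(0,1,0,0), P₃=(0,0,1,0), P₄=(0,0,0,1), P₅=(1,1,0,0), P₆=(1,0,1,0), P₇=(1,0,0,1), P₈=(0,1,1,0), P₉=(0,1,0,1), P₁₀=(0,0,1,1), P₁₁=(1,−1,0,0), P₁₂=(1,0,−1,0), P₁₃=(1,0,0,−1), P₁₄=(0,1,−1,0), P₁₅=(0,1,0,−1), P₁₆=(0,0,1,−1), together with the eight vectors (1,e₂,e₃,e₄) with e₂,e₃,e₄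 ∈ {1,−1}. In particular, the common zero locus of m₀,…,m₁₁ in ℂ⁴ is the union of the 24 lines through the origin spanned by these vectors. -/
/-!
The generators `xᵢxⱼ(xᵢ² - xⱼ²)` force any two nonzero coordinates of a common zero to agree up to
sign, so the vector is a multiple of a vector `ε` with entries in `{0, 1, -1}`. On such a vector
the generators `xᵢxⱼ(xₖ² - xₗ²)` say that as soon as two coordinates are nonzero, the others vanish
simultaneously or not at all. In four coordinates this rules out exactly the supports of size
three, and what remains is, up to sign, the `F₄` configuration.
-/

/-- The twelve degree-4 generators of the ideal of the `F₄` root-system configuration,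
as functions on `ℂ⁴`. -/
noncomputable def m₀ (v : Fin 4 → ℂ) : ℂ := v 0 * v 1 * ((v 0)^2 - (v 1)^2)
noncomputable def m₁ (v : Fin 4 → ℂ) : ℂ := v 0 * v 1 * ((v 2)^2 - (v 3)^2)
noncomputable def m₂ (v : Fin 4 → ℂ) : ℂ := v 0 * v 2 * ((v 0)^2 - (v 2)^2)
noncomputable def m₃ (v : Fin 4 → ℂ) : ℂ := v 0 * v 2 * ((v 1)^2 - (v 3)^2)
noncomputable def m₄ (v : Fin 4 → ℂ) : ℂ := v 0 * v 3 * ((v 0)^2 - (v 3)^2)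
noncomputable def m₅ (v : Fin 4 → ℂ) : ℂ := v 0 * v 3 * ((v 2)^2 - (v 1)^2)
noncomputable def m₆ (v : Fin 4 → ℂ) : ℂ := v 1 * v 2 * ((v 1)^2 - (v 2)^2)
noncomputable def m₇ (v : Fin 4 → ℂ) : ℂ := v 1 * v 2 * ((v 0)^2 - (v 3)^2)
noncomputable def m₈ (v : Fin 4 → ℂ) : ℂ := v 1 * v 3 * ((v 1)^2 - (v 3)^2)
noncomputable def m₉ (v : Fin 4 → ℂ) : ℂ := v 1 * v 3 * ((v 0)^2 - (v 2)^2)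
noncomputable def m₁₀ (v : Fin 4 → ℂ) : ℂ := v 2 * v 3 * ((v 2)^2 - (v 3)^2)
noncomputable def m₁₁ (v : Fin 4 → ℂ) : ℂ := v 2 * v 3 * ((v 0)^2 - (v 1)^2)

/-- The 24 vectors of the `F₄` root-system configuration. -/
noncomputable def F4pts : List (Fin 4 → ℂ) :=
  [![1,0,0,0], ![0,1,0,0], ![0,0,1,0], ![0,0,0,1],
   ![1,1,0,0], ![1,0,1,0], ![1,0,0,1],
   ![0,1,1,0], ![0,1,0,1], ![0,0,1,1],
   ![1,-1,0,0], ![1,0,-1,0], ![1,0,0,-1],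
   ![0,1,-1,0], ![0,1,0,-1], ![0,0,1,-1],
   ![1,1,1,1], ![1,1,1,-1], ![1,1,-1,1], ![1,1,-1,-1],
   ![1,-1,1,1], ![1,-1,1,-1], ![1,-1,-1,1], ![1,-1,-1,-1]]

open Function

variable {ι R : Type*}

/-- The vectors on which the quartics `xᵢxⱼ(xᵢ² - xⱼ²)` and `xᵢxⱼ(xₖ² - xₗ²)`, with `i, j, k, l`
distinct, all vanish. In four coordinates the nonzero ones among these quartics are
`m₀, …, m₁₁` up to sign, so this is their common zero locus over any ring and index type. -/
structure IsF4Zero [CommRing R] (v : ι → R) : Prop where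
  pair : ∀ i j, v i * v j * (v i ^ 2 - v j ^ 2) = 0
  quad : ∀ i j k l, [i, j, k, l].Nodup → v i * v j * (v k ^ 2 - v l ^ 2) = 0

/-- The sign vectors with at most two nonzero entries or with no zero entry. In four coordinates
these are `0`, the long roots `±eᵢ ± eⱼ` of `F₄`, and its short roots `±eᵢ` and
`(±e₁ ± e₂ ± e₃ ± e₄) / 2`, the latter scaled by `2`. -/
def IsF4Sign (ε : ι → SignType) : Prop :=
  (support ε).encard ≤ 2 ∨ support ε = Set.univ

theorem encard_le_two_or_eq_univ_iff {s : Set ι} :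
    s.encard ≤ 2 ∨ s = Set.univ ↔
      ∀ i j k l, [i, j, k, l].Nodup → i ∈ s → j ∈ s → (k ∈ s ↔ l ∈ s) := by
  constructor
  · rintro (hs | rfl) i j k l hnodup hi hj
    · have mem_iff (a : ι) : a ∈ s ↔ a = i ∨ a = j := by
        have hij : i ≠ j := by simp_all
        have hpair : {i, j} = s :=
          (Set.toFinite {i, j}).eq_of_subset_of_encard_le (Set.pair_subset hi hj)
            (hs.trans (Set.encard_pair hij).ge)
        simp [← hpair]
      simp_all [eq_comm]
    · simp
  · intro h
    by_contra! ⟨hcard, huniv⟩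
    obtain ⟨t, hts, ht⟩ := Set.exists_subset_encard_eq (Order.add_one_le_of_lt hcard)
    obtain ⟨i, j, k, hij, hik, hjk, rfl⟩ := Set.encard_eq_three.mp ht
    obtain ⟨l, hl⟩ := (Set.ne_univ_iff_exists_notMem s).mp huniv
    obtain ⟨hi, hj, hk⟩ : i ∈ s ∧ j ∈ s ∧ k ∈ s := by simpa [Set.insert_subset_iff] using hts
    have hnodup : [i, j, k, l].Nodup := by
      simp [hij, hik, hjk, ne_of_mem_of_not_mem hi hl, ne_of_mem_of_not_mem hj hl,
        ne_of_mem_of_not_mem hk hl]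
    exact hl ((h i j k l hnodup hi hj).mp hk)

section CommonZeros

variable [CommRing R]

theorem isF4Zero_iff_of_lt [LinearOrder ι] {v : ι → R} :
    IsF4Zero v ↔
      (∀ i j, i < j → v i * v j * (v i ^ 2 - v j ^ 2) = 0) ∧
        ∀ i j k l, i < j → k < l → [i, j, k, l].Nodup → v i * v j * (v k ^ 2 - v l ^ 2) = 0 := by
  refine ⟨fun h => ⟨fun i j _ => h.pair i j, fun i j k l _ _ => h.quad i j k l⟩, ?_⟩
  rintro ⟨hpair, hquad⟩
  refine ⟨fun i j => ?_, fun i j k l hnodup => ?_⟩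
  · wlog hij : i ≤ j generalizing i j
    · linear_combination -this j i (le_of_not_ge hij)
    obtain rfl | hij := hij.eq_or_lt
    · ring
    · exact hpair i j hij
  · obtain ⟨hij_ne, hkl_ne⟩ : i ≠ j ∧ k ≠ l := by simp_all
    wlog hij : i < j generalizing i j
    · linear_combination
        this j i (hnodup.perm (.swap ..)) hij_ne.symm (hij_ne.lt_or_gt.resolve_left hij)
    wlog hkl : k < l generalizing k l hkl_ne
    · have hperm : [i, j, k, l].Perm [i, j, l, k] := ((List.Perm.swap l k []).cons j).cons i
      linear_combination
        -this l k hkl_ne.symm (hnodup.perm hperm) (hkl_ne.lt_or_gt.resolve_left hkl)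
    exact hquad i j k l hij hkl hnodup

theorem IsF4Sign.isF4Zero_smul {ε : ι → SignType} (hε : IsF4Sign ε) (t : R) :
    IsF4Zero fun i => t * ε i where
  pair i j := by
    rcases ε i with _ | _ | _ <;> rcases ε j with _ | _ | _ <;> simp
  quad i j k l hnodup := by
    by_cases hi : ε i = 0
    · simp [hi]
    by_cases hj : ε j = 0
    · simp [hj]
    have hkl : ε k ≠ 0 ↔ ε l ≠ 0 := encard_le_two_or_eq_univ_iff.mp hε i j k l hnodup hi hj
    have hsq : ε k ^ 2 = ε l ^ 2 := by
      generalize ε k = a, ε l = b at hkl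
      decide +revert
    have hcast : (ε k : R) ^ 2 = (ε l : R) ^ 2 := mod_cast congrArg SignType.cast hsq
    linear_combination t ^ 4 * ε i * ε j * hcast

variable [NoZeroDivisors R]

theorem exists_eq_smul_sign_of_pairwise {v : ι → R}
    (hv : ∀ i j, v i * v j * (v i ^ 2 - v j ^ 2) = 0) :
    ∃ (ε : ι → SignType) (t : R), (v = fun i => t * ε i) ∧ support v = support ε := by
  by_cases h : ∃ i, v i ≠ 0
  · obtain ⟨i, hi⟩ := h
    have coord (j : ι) : ∃ s : SignType, v j = v i * s ∧ (v j = 0 ↔ s = 0) := by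
      by_cases hj : v j = 0
      · exact ⟨0, by simp [hj]⟩
      · have hsq : v j ^ 2 = v i ^ 2 := by simpa [hi, hj, sub_eq_zero] using hv j i
        obtain hpos | hneg := sq_eq_sq_iff_eq_or_eq_neg.mp hsq
        · exact ⟨1, by simp [hpos, hi]⟩
        · exact ⟨-1, by simp [hneg, hi]⟩
    choose ε hε hzero using coord
    exact ⟨ε, v i, funext hε, Set.ext fun j => (hzero j).not⟩
  · push Not at h
    exact ⟨0, 0, by ext i; simp [h], by ext i; simp [h]⟩

theorem IsF4Zero.isF4Sign_of_support_eq {v : ι → R} (hv : IsF4Zero v) {ε : ι → SignType}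
    (hε : support v = support ε) : IsF4Sign ε := by
  rw [IsF4Sign, ← hε, encard_le_two_or_eq_univ_iff]
  intro i j k l hnodup hi hj
  have hsq : v k ^ 2 = v l ^ 2 := by
    simpa [mem_support.mp hi, mem_support.mp hj, sub_eq_zero] using hv.quad i j k l hnodup
  rw [mem_support, mem_support, ← pow_ne_zero_iff two_ne_zero, hsq, pow_ne_zero_iff two_ne_zero]

theorem common_zeros_of_F4_generators_general (v : ι → R) :
    IsF4Zero v ↔ ∃ ε : ι → SignType, IsF4Sign ε ∧ ∃ t : R, v = fun i => t * ε i := by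
  constructor
  · intro hv
    obtain ⟨ε, t, hvt, hsupp⟩ := exists_eq_smul_sign_of_pairwise hv.pair
    exact ⟨ε, hv.isF4Sign_of_support_eq hsupp, t, hvt⟩
  · rintro ⟨ε, hε, t, rfl⟩
    exact hε.isF4Zero_smul t

end CommonZeros

theorem isF4Zero_iff_generators_eq_zero (v : Fin 4 → ℂ) :
    IsF4Zero v ↔
      m₀ v = 0 ∧ m₁ v = 0 ∧ m₂ v = 0 ∧ m₃ v = 0 ∧ m₄ v = 0 ∧ m₅ v = 0 ∧
        m₆ v = 0 ∧ m₇ v = 0 ∧ m₈ v = 0 ∧ m₉ v = 0 ∧ m₁₀ v = 0 ∧ m₁₁ v = 0 := by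
  constructor
  · rintro ⟨hpair, hquad⟩
    exact ⟨hpair 0 1, hquad 0 1 2 3 (by decide), hpair 0 2, hquad 0 2 1 3 (by decide),
      hpair 0 3, hquad 0 3 2 1 (by decide), hpair 1 2, hquad 1 2 0 3 (by decide),
      hpair 1 3, hquad 1 3 0 2 (by decide), hpair 2 3, hquad 2 3 0 1 (by decide)⟩
  · rintro ⟨h₀, h₁, h₂, h₃, h₄, h₅, h₆, h₇, h₈, h₉, h₁₀, h₁₁⟩
    rw [isF4Zero_iff_of_lt]
    constructor
    · intro i j hij
      fin_cases i <;> fin_cases j <;> first | contradiction | assumption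
    · intro i j k l hij hkl hnodup
      have h₅' : v 0 * v 3 * (v 1 ^ 2 - v 2 ^ 2) = 0 := by
        rw [m₅] at h₅
        linear_combination -h₅
      fin_cases i <;> fin_cases j <;> try contradiction
      all_goals fin_cases k <;> fin_cases l <;> first | contradiction | assumption

/-- The entries of `F4pts` as sign vectors, on which membership is decidable. -/
def F4signs : List (Fin 4 → SignType) :=
  [![1, 0, 0, 0], ![0, 1, 0, 0], ![0, 0, 1, 0], ![0, 0, 0, 1],
   ![1, 1, 0, 0], ![1, 0, 1, 0], ![1, 0, 0, 1],
   ![0, 1, 1, 0], ![0, 1, 0, 1], ![0, 0, 1, 1],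
   ![1, -1, 0, 0], ![1, 0, -1, 0], ![1, 0, 0, -1],
   ![0, 1, -1, 0], ![0, 1, 0, -1], ![0, 0, 1, -1],
   ![1, 1, 1, 1], ![1, 1, 1, -1], ![1, 1, -1, 1], ![1, 1, -1, -1],
   ![1, -1, 1, 1], ![1, -1, 1, -1], ![1, -1, -1, 1], ![1, -1, -1, -1]]

theorem F4pts_eq_map_F4signs : F4pts = F4signs.map fun ε i => (ε i : ℂ) := by
  simp [F4pts, F4signs, funext_iff, Fin.forall_fin_succ]

theorem isF4Sign_iff_card [Fintype ι] {ε : ι → SignType} :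
    IsF4Sign ε ↔ Finset.card {i | ε i ≠ 0} ≤ 2 ∨ ∀ i, ε i ≠ 0 := by
  have hsupp : support ε = ({i | ε i ≠ 0} : Finset ι) := by ext; simp
  rw [IsF4Sign, Set.eq_univ_iff_forall, hsupp, Set.encard_coe_eq_coe_finsetCard]
  simp

theorem isF4Sign_iff_mem_F4signs (ε : Fin 4 → SignType) :
    IsF4Sign ε ↔ ε = 0 ∨ ε ∈ F4signs ∨ -ε ∈ F4signs := by
  rw [isF4Sign_iff_card]
  decide +kernel +revert

theorem exists_mem_F4pts_smul_iff (v : Fin 4 → ℂ) :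
    (∃ P ∈ F4pts, ∃ t : ℂ, v = t • P) ↔
      ∃ ε : Fin 4 → SignType, IsF4Sign ε ∧ ∃ t : ℂ, v = fun i => t * ε i := by
  simp only [F4pts_eq_map_F4signs, List.mem_map, exists_exists_and_eq_and, isF4Sign_iff_mem_F4signs]
  constructor
  · rintro ⟨ε, hε, t, rfl⟩
    exact ⟨ε, .inr (.inl hε), t, rfl⟩
  · rintro ⟨ε, rfl | hε | hε, t, rfl⟩
    · exact ⟨![1, 0, 0, 0], by simp [F4signs], 0, by ext; simp⟩
    · exact ⟨ε, hε, t, rfl⟩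
    · exact ⟨-ε, hε, -t, by ext; simp⟩

/-- A vector `v ∈ ℂ⁴` is a common zero of `m₀, …, m₁₁` if and only if it is a scalar multiple
of one of the 24 vectors of the `F₄` configuration; i.e. the common zero locus of
`m₀, …, m₁₁` in `ℂ⁴` is the union of the 24 lines spanned by these vectors. -/
theorem common_zeros_of_F4_generators (v : Fin 4 → ℂ) :
    (m₀ v = 0 ∧ m₁ v = 0 ∧ m₂ v = 0 ∧ m₃ v = 0 ∧ m₄ v = 0 ∧ m₅ v = 0 ∧
     m₆ v = 0 ∧ m₇ v = 0 ∧ m₈ v = 0 ∧ m₉ v = 0 ∧ m₁₀ v = 0 ∧ m₁₁ v = 0) ↔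
    ∃ P ∈ F4pts, ∃ t : ℂ, v = t • P := by
  rw [← isF4Zero_iff_generators_eq_zero, exists_mem_F4pts_smul_iff]
  exact common_zeros_of_F4_generators_general v
end

section
/- The six quintics f₁,…,f₆ form a basis of the ℂ-vector space of homogeneous polynomials of degree 5 in ℂ[x,y,z] that vanish at all 15 points P₁,…,P₁₅ of Z(H₃); in particular this space has dimension 6, i.e., the 15 points impose independent conditions on quintics. -/
open MvPolynomial

/-- The six linear forms dual to the lines of the `H₃` configuration. -/
noncomputable def H3L (u : ℂ) : Fin 6 → MvPolynomial (Fin 3) ℂ :=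
  ![X 1 - C (u - 1) * X 2, X 1 + C (u - 1) * X 2,
    X 0 - C u * X 2, X 0 + C u * X 2,
    X 0 - C (u - 1) * X 1, X 0 + C (u - 1) * X 1]

/-- The six quintics `fᵢ = ∏_{j ≠ i} Lⱼ`. -/
noncomputable def H3f (u : ℂ) (i : Fin 6) : MvPolynomial (Fin 3) ℂ :=
  ∏ j ∈ Finset.univ.erase i, H3L u j

/-- The 15 points of the `H₃` root-system configuration. -/
noncomputable def H3pts (u : ℂ) : Fin 15 → (Fin 3 → ℂ) :=
  ![![1,0,0], ![0,1,0], ![0,0,1],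
    ![1,u,u^2], ![-1,u,u^2], ![1,-u,u^2], ![1,u,-u^2],
    ![u,-u^2,1], ![-u,u^2,1], ![u,u^2,-1], ![u,u^2,1],
    ![u^2,1,-u], ![u^2,-1,u], ![-u^2,1,u], ![u^2,1,u]]

/-- The `ℂ`-vector space of homogeneous polynomials of degree `d` in `ℂ[x,y,z]`
vanishing at all 15 points of `Z(H₃)`. -/
noncomputable def H3V (u : ℂ) (d : ℕ) : Submodule ℂ (MvPolynomial (Fin 3) ℂ) :=
  homogeneousSubmodule (Fin 3) ℂ d ⊓
    ⨅ i : Fin 15, LinearMap.ker (aeval (R := ℂ) (H3pts u i)).toLinearMap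

open Module

section Restriction

variable {R K σ ι : Type*} [CommSemiring R] [Field K]

lemma eval_smul_of_isHomogeneous {f : MvPolynomial σ R} {d : ℕ} (hf : f.IsHomogeneous d)
    (c : R) (v : σ → R) : eval (c • v) f = c ^ d * eval v f := by
  rw [eval_eq, eval_eq, Finset.mul_sum]
  refine Finset.sum_congr rfl fun m hm => ?_
  have hdeg : ∑ s ∈ m.support, m s = d := by
    simpa only [Finsupp.weight_apply, Finsupp.sum, Pi.one_apply, smul_eq_mul, mul_one]
      using hf (mem_support_iff.1 hm)
  simp only [Pi.smul_apply, smul_eq_mul, mul_pow, Finset.prod_mul_distrib,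
    Finset.prod_pow_eq_pow_sum, hdeg]
  ring

lemma exists_polynomial_eval_eq_eval_add_smul (f : MvPolynomial σ R) (v w : σ → R) :
    ∃ p : Polynomial R, p.natDegree ≤ f.totalDegree ∧ ∀ t, p.eval t = eval (v + t • w) f := by
  let line : σ → Polynomial R := fun s => Polynomial.C (v s) + Polynomial.C (w s) * Polynomial.X
  have hline (s : σ) : (line s).natDegree ≤ 1 := by
    simp only [line]
    compute_degree
  refine ⟨aeval line f, ?_, fun t => ?_⟩
  · simpa only [mul_one] using aeval_natDegree_le f le_rfl line hline
  · rw [← Polynomial.coe_aeval_eq_eval, ← AlgHom.comp_apply, comp_aeval, aeval_eq_eval]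
    congr 2
    ext s
    rw [Polynomial.coe_aeval_eq_eval, Polynomial.eval_add, Polynomial.eval_C,
      Polynomial.eval_C_mul, Polynomial.eval_X, Pi.add_apply, Pi.smul_apply, smul_eq_mul, mul_comm]

/-- A point `v` on none of the hyperplanes is joined to a generic direction `w`; the resulting line
meets the hyperplanes in more than `deg f` distinct points. -/
theorem eval_eq_zero_of_forall_hyperplane [Infinite K] [Fintype ι] {f : MvPolynomial σ K}
    {ℓ : ι → Dual K (σ → K)} {W : Submodule K (σ → K)}
    (hdeg : f.totalDegree < Fintype.card ι)
    (hℓ : Pairwise fun a b => ∃ x ∈ W, ℓ a x = 0 ∧ ℓ b x ≠ 0)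
    (hf : ∀ a, ∀ x ∈ W, ℓ a x = 0 → eval x f = 0) {v : σ → K} (hv : v ∈ W) :
    eval v f = 0 := by
  by_cases hℓv : ∃ a, ℓ a v = 0
  · obtain ⟨a, ha⟩ := hℓv
    exact hf a v hv ha
  push Not at hℓv
  obtain ⟨w, hw, hgeneric⟩ : ∃ w ∈ W, ∀ c : ι ⊕ {p : ι × ι // p.1 ≠ p.2},
      Sum.elim ℓ (fun p => ℓ p.1.1 v • ℓ p.1.2 - ℓ p.1.2 v • ℓ p.1.1) c w ≠ 0 := by
    refine Dual.exists_forall_mem_ne_zero_of_forall_exists W _ ?_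
    rintro (a | ⟨⟨a, b⟩, hab⟩)
    · exact ⟨v, hv, hℓv a⟩
    · obtain ⟨x, hx, hax, hbx⟩ := hℓ hab
      exact ⟨x, hx, by simpa [hax] using ⟨hℓv a, hbx⟩⟩
  have hℓw (a : ι) : ℓ a w ≠ 0 := hgeneric (.inl a)
  have hcross {a b : ι} (hab : a ≠ b) : ℓ a v * ℓ b w ≠ ℓ b v * ℓ a w := by
    simpa [sub_ne_zero] using hgeneric (.inr ⟨(a, b), hab⟩)
  obtain ⟨p, hpdeg, hp⟩ := exists_polynomial_eval_eq_eval_add_smul f v w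
  have hroots_injective : Function.Injective fun a => -(ℓ a v / ℓ a w) := by
    intro a b hab
    by_contra hne
    exact hcross hne ((div_eq_div_iff (hℓw a) (hℓw b)).1 (neg_injective hab))
  have hroots (a : ι) : p.eval (-(ℓ a v / ℓ a w)) = 0 := by
    rw [hp]
    refine hf a _ (W.add_mem hv (W.smul_mem _ hw)) ?_
    rw [map_add, map_smul, smul_eq_mul, neg_mul, div_mul_cancel₀ _ (hℓw a), add_neg_cancel]
  have hp_zero : p = 0 := Polynomial.eq_zero_of_natDegree_lt_card_of_eval_eq_zero p
    hroots_injective hroots (hpdeg.trans_lt hdeg)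
  simpa [hp_zero] using (hp 0).symm

end Restriction

section StarConfiguration

variable {K V ι κ : Type*} [Field K] [AddCommGroup V] [Module K V]

/-- The points `P k` form the star configuration of the lines `ℓ i = 0` in the projective plane of
a three-dimensional space `V`: any two lines meet in some `P k`, each `P k` is on exactly two lines,
and there are at least three lines. Points are given by vectors of `V`; listing a point several
times is allowed. -/
structure IsStarConfiguration (ℓ : ι → Dual K V) (P : κ → V) : Prop where
  three_le_card : 3 ≤ ENat.card ι
  exists_point : ∀ i j, i ≠ j → ∃ k, ∀ l, ℓ l (P k) = 0 ↔ l = i ∨ l = j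
  exists_lines : ∀ k, ∃ i j, i ≠ j ∧ ∀ l, ℓ l (P k) = 0 ↔ l = i ∨ l = j

namespace IsStarConfiguration

variable {ℓ : ι → Dual K V} {P : κ → V}

lemma exists_third (h : IsStarConfiguration ℓ P) (i j : ι) : ∃ l, l ≠ i ∧ l ≠ j :=
  ENat.exists_ne_ne_of_three_le h.three_le_card i j

lemma point_ne_zero (h : IsStarConfiguration ℓ P) (k : κ) : P k ≠ 0 := by
  obtain ⟨i, j, -, hk⟩ := h.exists_lines k
  obtain ⟨l, hli, hlj⟩ := h.exists_third i j
  intro hP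
  exact ((hk l).1 (by rw [hP, map_zero])).elim hli hlj

lemma eq_zero_of_mem_three_lines (h : IsStarConfiguration ℓ P) (hV : finrank K V = 3)
    {i j l : ι} (hij : i ≠ j) (hil : i ≠ l) (hjl : j ≠ l) {v : V}
    (hi : ℓ i v = 0) (hj : ℓ j v = 0) (hl : ℓ l v = 0) : v = 0 := by
  obtain ⟨kjl, hjl_iff⟩ := h.exists_point j l hjl
  obtain ⟨kil, hil_iff⟩ := h.exists_point i l hil
  obtain ⟨kij, hij_iff⟩ := h.exists_point i j hij
  have : Module.Finite K V := Module.finite_of_finrank_pos (by omega)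
  let coords : V →ₗ[K] Fin 3 → K := LinearMap.pi ![ℓ i, ℓ j, ℓ l]
  have hsurj : Function.Surjective coords := by
    intro c
    refine ⟨(c 0 / ℓ i (P kjl)) • P kjl + (c 1 / ℓ j (P kil)) • P kil
      + (c 2 / ℓ l (P kij)) • P kij, ?_⟩
    ext a
    have hi_off : ℓ i (P kil) = 0 ∧ ℓ i (P kij) = 0 :=
      ⟨(hil_iff i).2 (.inl rfl), (hij_iff i).2 (.inl rfl)⟩
    have hj_off : ℓ j (P kjl) = 0 ∧ ℓ j (P kij) = 0 :=
      ⟨(hjl_iff j).2 (.inl rfl), (hij_iff j).2 (.inr rfl)⟩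
    have hl_off : ℓ l (P kjl) = 0 ∧ ℓ l (P kil) = 0 :=
      ⟨(hjl_iff l).2 (.inr rfl), (hil_iff l).2 (.inr rfl)⟩
    have hi_diag : ℓ i (P kjl) ≠ 0 := by simp [hjl_iff, hij, hil]
    have hj_diag : ℓ j (P kil) ≠ 0 := by simp [hil_iff, hij.symm, hjl]
    have hl_diag : ℓ l (P kij) ≠ 0 := by simp [hij_iff, hil.symm, hjl.symm]
    fin_cases a <;> simp [coords, hi_off, hj_off, hl_off, hi_diag, hj_diag, hl_diag]
  have hinj : Function.Injective coords :=
    (LinearMap.injective_iff_surjective_of_finrank_eq_finrank (by simp [hV])).2 hsurj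
  refine hinj ?_
  ext a
  fin_cases a <;> simp [coords, hi, hj, hl]

lemma exists_eq_smul_point (h : IsStarConfiguration ℓ P) (hV : finrank K V = 3) {i j : ι} {k : κ}
    (hij : i ≠ j) (hk : ∀ l, ℓ l (P k) = 0 ↔ l = i ∨ l = j) {v : V}
    (hi : ℓ i v = 0) (hj : ℓ j v = 0) : ∃ c : K, v = c • P k := by
  obtain ⟨l, hli, hlj⟩ := h.exists_third i j
  have hl : ℓ l (P k) ≠ 0 := fun h0 => ((hk l).1 h0).elim hli hlj
  refine ⟨ℓ l v / ℓ l (P k),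
    sub_eq_zero.1 (h.eq_zero_of_mem_three_lines hV hij hli.symm hlj.symm ?_ ?_ ?_)⟩
  · simp [hi, (hk i).2 (.inl rfl)]
  · simp [hj, (hk j).2 (.inr rfl)]
  · simp [hl]

/-- The general line `m = 0` meets the line `ℓ i = 0` in the new point `Q i`. -/
lemma exists_extension [Infinite K] [Finite κ] (h : IsStarConfiguration ℓ P)
    (hV : finrank K V = 3) :
    ∃ (m : Dual K V) (Q : ι → V),
      (∀ i j, ℓ j (Q i) = 0 ↔ j = i) ∧
      IsStarConfiguration (fun o : Option ι => o.elim m ℓ) (Sum.elim P Q) := by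
  obtain ⟨m, hmP⟩ := Module.exists_dual_forall_apply_ne_zero (K := K) P h.point_ne_zero
  have : Module.Finite K V := Module.finite_of_finrank_pos (by omega)
  have hmeet (i : ι) : ∃ q : V, m q = 0 ∧ ∀ j, ℓ j q = 0 ↔ j = i := by
    have hker : LinearMap.ker ((ℓ i).prod m) ≠ ⊥ :=
      LinearMap.ker_ne_bot_of_finrank_lt (by simp [hV])
    obtain ⟨q, hq, hq0⟩ := Submodule.exists_mem_ne_zero_of_ne_bot hker
    obtain ⟨hiq, hmq⟩ : ℓ i q = 0 ∧ m q = 0 := by simpa using hq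
    refine ⟨q, hmq, fun j => ⟨fun hjq => ?_, fun hji => hji ▸ hiq⟩⟩
    by_contra hji
    obtain ⟨k, hk⟩ := h.exists_point j i hji
    obtain ⟨c, rfl⟩ := h.exists_eq_smul_point hV hji hk hjq hiq
    have hc : c = 0 := by simpa [hmP k] using hmq
    exact hq0 (by rw [hc, zero_smul])
  choose Q hmQ hQ using hmeet
  let ℓ' : Option ι → Dual K V := fun o => o.elim m ℓ
  have hnew (i : ι) (o : Option ι) : ℓ' o (Q i) = 0 ↔ o = none ∨ o = some i := by
    cases o <;> simp [ℓ', hmQ, hQ]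
  have hold {i j : ι} {k : κ} (hk : ∀ l, ℓ l (P k) = 0 ↔ l = i ∨ l = j) (o : Option ι) :
      ℓ' o (P k) = 0 ↔ o = some i ∨ o = some j := by
    cases o <;> simp [ℓ', hmP, hk]
  refine ⟨m, Q, hQ, ?_, ?_, ?_⟩
  · exact h.three_le_card.trans (ENat.card_le_card_of_injective (Option.some_injective ι))
  · rintro (_ | i) (_ | j) hij
    · exact absurd rfl hij
    · exact ⟨.inr j, hnew j⟩
    · exact ⟨.inr i, fun o => (hnew i o).trans or_comm⟩
    · obtain ⟨k, hk⟩ := h.exists_point i j (by simpa using hij)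
      exact ⟨.inl k, hold hk⟩
  · rintro (k | i)
    · obtain ⟨i, j, hij, hk⟩ := h.exists_lines k
      exact ⟨some i, some j, by simpa using hij, hold hk⟩
    · exact ⟨none, some i, by simp, hnew i⟩

/-- On the line `ℓ i = 0` the form vanishes at more points than its degree, so it vanishes on all of
these lines, whose number again exceeds its degree. -/
theorem eq_zero_of_isHomogeneous [Infinite K] [Fintype ι] {ℓ : ι → Dual K (Fin 3 → K)}
    {P : κ → Fin 3 → K} (h : IsStarConfiguration ℓ P) {f : MvPolynomial (Fin 3) K} {d : ℕ}
    (hf : f.IsHomogeneous d) (hd : d + 1 < Fintype.card ι) (hP : ∀ k, eval (P k) f = 0) :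
    f = 0 := by
  classical
  have hV : finrank K (Fin 3 → K) = 3 := by simp
  have hmeet {i j : ι} (hij : i ≠ j) {v : Fin 3 → K} (hi : ℓ i v = 0) (hj : ℓ j v = 0) :
      eval v f = 0 := by
    obtain ⟨k, hk⟩ := h.exists_point i j hij
    obtain ⟨c, rfl⟩ := h.exists_eq_smul_point hV hij hk hi hj
    rw [eval_smul_of_isHomogeneous hf, hP, mul_zero]
  have hline (i : ι) {v : Fin 3 → K} (hv : ℓ i v = 0) : eval v f = 0 := by
    refine eval_eq_zero_of_forall_hyperplane (W := LinearMap.ker (ℓ i))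
      (ℓ := fun j : {j // j ≠ i} => ℓ j) ?_ ?_ (fun j x hx hj => hmeet j.2 hj hx) hv
    · rw [Fintype.card_subtype_compl, Fintype.card_subtype_eq]
      have := hf.totalDegree_le
      omega
    · rintro ⟨a, hai⟩ ⟨b, hbi⟩ hab
      obtain ⟨k, hk⟩ := h.exists_point i a hai.symm
      refine ⟨P k, (hk i).2 (.inl rfl), (hk a).2 (.inr rfl), fun hb => ?_⟩
      exact ((hk b).1 hb).elim hbi fun hba => hab (Subtype.ext hba.symm)
  refine MvPolynomial.funext fun v => ?_
  rw [map_zero]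
  refine eval_eq_zero_of_forall_hyperplane (W := ⊤) (ℓ := ℓ) ?_ ?_
    (fun i x _ hx => hline i hx) Submodule.mem_top
  · have := hf.totalDegree_le
    omega
  · intro a b hab
    obtain ⟨c, hca, hcb⟩ := h.exists_third a b
    obtain ⟨k, hk⟩ := h.exists_point a c hca.symm
    refine ⟨P k, Submodule.mem_top, (hk a).2 (.inl rfl), fun hb => ?_⟩
    exact ((hk b).1 hb).elim hab.symm hcb.symm

end IsStarConfiguration

end StarConfiguration

section Basis

variable {K ι κ σ : Type*} [Field K]

/-- The space of forms of degree `d` vanishing at all the points `P k`; for the points of `Z(H₃)` it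
is `H3V`. -/
noncomputable def vanishingForms (P : κ → σ → K) (d : ℕ) : Submodule K (MvPolynomial σ K) :=
  homogeneousSubmodule σ K d ⊓ ⨅ k, LinearMap.ker (aeval (R := K) (P k)).toLinearMap

lemma mem_vanishingForms {P : κ → σ → K} {d : ℕ} {f : MvPolynomial σ K} :
    f ∈ vanishingForms P d ↔ f.IsHomogeneous d ∧ ∀ k, eval (P k) f = 0 := by
  simp [vanishingForms, aeval_eq_eval]

/-- The linear functional on `σ → K` whose coefficients are the `i`-th row of `N`. It is evaluation
of the linear form `N.toMvPolynomial i`. -/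
def rowFunctional [Fintype σ] (N : Matrix ι σ K) (i : ι) : Dual K (σ → K) :=
  LinearMap.proj i ∘ₗ N.mulVecLin

lemma eval_toMvPolynomial_eq_rowFunctional [Fintype σ] (N : Matrix ι σ K) (i : ι) (v : σ → K) :
    eval v (N.toMvPolynomial i) = rowFunctional N i v :=
  N.toMvPolynomial_eval_eq_apply i v

variable [Fintype ι] [DecidableEq ι]

lemma eval_prod_erase_eq_zero_iff [Fintype σ] (N : Matrix ι σ K) (i : ι) (v : σ → K) :
    eval v (∏ j ∈ Finset.univ.erase i, N.toMvPolynomial j) = 0 ↔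
      ∃ j ≠ i, rowFunctional N j v = 0 := by
  simp [map_prod, Finset.prod_eq_zero_iff, eval_toMvPolynomial_eq_rowFunctional]

namespace IsStarConfiguration

variable {N : Matrix ι (Fin 3) K} {P : κ → Fin 3 → K} {d : ℕ}

lemma prod_erase_mem_vanishingForms (h : IsStarConfiguration (rowFunctional N) P)
    (hd : Fintype.card ι = d + 1) (i : ι) :
    ∏ j ∈ Finset.univ.erase i, N.toMvPolynomial j ∈ vanishingForms P d := by
  refine mem_vanishingForms.2 ⟨?_, fun k => ?_⟩
  · simpa [hd] using IsHomogeneous.prod (Finset.univ.erase i) N.toMvPolynomial (fun _ => 1)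
      fun j _ => N.toMvPolynomial_isHomogeneous j
  · obtain ⟨a, b, hab, hk⟩ := h.exists_lines k
    rw [eval_prod_erase_eq_zero_iff]
    obtain rfl | hai := eq_or_ne a i
    · exact ⟨b, hab.symm, (hk b).2 (.inr rfl)⟩
    · exact ⟨a, hai, (hk a).2 (.inl rfl)⟩

/-- Add a general line, meeting the `i`-th line in `Q i`. A form of degree `d` vanishing at all
points of the extended configuration is zero, so the values at the `Q i` are coordinates; the
product omitting the `i`-th form is the only one not vanishing at `Q i`. -/
theorem exists_basis_prod_erase [Infinite K] [Finite κ]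
    (h : IsStarConfiguration (rowFunctional N) P) (hd : Fintype.card ι = d + 1) :
    ∃ B : Basis ι K (vanishingForms P d),
      ∀ i, (B i : MvPolynomial (Fin 3) K) = ∏ j ∈ Finset.univ.erase i, N.toMvPolynomial j := by
  obtain ⟨m, Q, hQ, hext⟩ := h.exists_extension (by simp)
  let e (i : ι) : vanishingForms P d :=
    ⟨∏ j ∈ Finset.univ.erase i, N.toMvPolynomial j, h.prod_erase_mem_vanishingForms hd i⟩
  let value (i : ι) : Dual K (vanishingForms P d) :=
    (aeval (R := K) (Q i)).toLinearMap ∘ₗ (vanishingForms P d).subtype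
  have hvalue (i : ι) (f : vanishingForms P d) :
      value i f = eval (Q i) (f : MvPolynomial (Fin 3) K) := by
    simp [value, aeval_eq_eval]
  have hvalue_e (i j : ι) : value i (e j) = 0 ↔ i ≠ j := by
    rw [hvalue, eval_prod_erase_eq_zero_iff]
    simp [hQ]
  have hdual : DualBases e fun i => (value i (e i))⁻¹ • value i :=
    { eval_same := fun i => inv_mul_cancel₀ (by simp [hvalue_e])
      eval_of_ne := fun i j hij => by simp [(hvalue_e i j).2 hij]
      total := fun {f g} hfg => by
        have hQfg (i : ι) : eval (Q i) (f - g : MvPolynomial (Fin 3) K) = 0 := by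
          have hne : value i (e i) ≠ 0 := by simp [hvalue_e]
          have hvalue_eq : value i f = value i g := by simpa [hne] using hfg i
          rw [map_sub, ← hvalue, ← hvalue, hvalue_eq, sub_self]
        have hfg_mem := mem_vanishingForms.1 (f - g).2
        refine Subtype.ext (sub_eq_zero.1 (hext.eq_zero_of_isHomogeneous hfg_mem.1 ?_ ?_))
        · simp [hd]
        · exact Sum.rec hfg_mem.2 hQfg }
  exact ⟨hdual.basis, fun i => by rw [hdual.coe_basis]⟩

end IsStarConfiguration

end Basis

section H3

/-- The coefficients of the six linear forms `H3L u`, one form per row. -/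
def H3lines (u : ℂ) : Matrix (Fin 6) (Fin 3) ℂ :=
  !![0, 1, -(u - 1); 0, 1, u - 1; 1, 0, -u; 1, 0, u; 1, -(u - 1), 0; 1, u - 1, 0]

lemma toMvPolynomial_H3lines (u : ℂ) : (H3lines u).toMvPolynomial = H3L u := by
  ext1 i
  fin_cases i <;>
    simp [Matrix.toMvPolynomial, H3lines, H3L, Fin.sum_univ_three, ← C_mul_X_eq_monomial]
  all_goals ring

/-- The indices of the two lines through each of the points `H3pts u`. -/
def H3incidence : Fin 15 → Fin 6 × Fin 6 :=
  ![(0, 1), (2, 3), (4, 5), (0, 4), (0, 5), (1, 5), (1, 4), (2, 5), (3, 5), (3, 4), (2, 4), (1, 3),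
    (1, 2), (0, 3), (0, 2)]

lemma rowFunctional_H3lines_H3pts_eq_zero_iff {u : ℂ} (hu : u ^ 2 = u + 1) (k : Fin 15)
    (l : Fin 6) : rowFunctional (H3lines u) l (H3pts u k) = 0 ↔
      l = (H3incidence k).1 ∨ l = (H3incidence k).2 := by
  fin_cases k <;> fin_cases l <;>
    simp [rowFunctional, H3lines, H3pts, H3incidence] <;> grind

lemma isStarConfiguration_H3 {u : ℂ} (hu : u ^ 2 = u + 1) :
    IsStarConfiguration (rowFunctional (H3lines u)) (H3pts u) where
  three_le_card := by
    rw [ENat.card_eq_coe_fintype_card, Fintype.card_fin]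
    norm_num
  exists_point i j hij := by
    have hmeet : ∀ i j : Fin 6, i ≠ j → ∃ k, H3incidence k = (i, j) ∨ H3incidence k = (j, i) := by
      decide
    obtain ⟨k, hk | hk⟩ := hmeet i j hij
    · exact ⟨k, fun l => by rw [rowFunctional_H3lines_H3pts_eq_zero_iff hu, hk]⟩
    · exact ⟨k, fun l => by rw [rowFunctional_H3lines_H3pts_eq_zero_iff hu, hk, or_comm]⟩
  exists_lines k :=
    ⟨_, _, by revert k; decide, rowFunctional_H3lines_H3pts_eq_zero_iff hu k⟩

lemma exists_basis_H3V_eq_H3f {u : ℂ} (hu : u ^ 2 = u + 1) :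
    ∃ B : Basis (Fin 6) ℂ (H3V u 5), ∀ i, (B i : MvPolynomial (Fin 3) ℂ) = H3f u i := by
  simpa only [toMvPolynomial_H3lines] using!
    (isStarConfiguration_H3 hu).exists_basis_prod_erase (d := 5) (by simp)

end H3

/-- The six quintics `f₁, …, f₆` form a basis of the space of homogeneous quintics vanishing
at the 15 points of `Z(H₃)`; in particular this space has dimension 6. -/
theorem H3f_is_basis_of_quintics (u : ℂ) (hu : u ^ 2 = u + 1) :
    (∀ i, H3f u i ∈ H3V u 5) ∧ LinearIndependent ℂ (H3f u) ∧
    Submodule.span ℂ (Set.range (H3f u)) = H3V u 5 ∧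
    Module.finrank ℂ (H3V u 5) = 6 := by
  obtain ⟨B, hB⟩ := exists_basis_H3V_eq_H3f hu
  have hcoe : H3f u = (H3V u 5).subtype ∘ B := funext fun i => (hB i).symm
  refine ⟨fun i => hB i ▸ (B i).2, ?_, ?_, ?_⟩
  · rw [hcoe]
    exact B.linearIndependent.map' _ (Submodule.ker_subtype _)
  · rw [hcoe, Set.range_comp, ← Submodule.map_span, B.span_eq, Submodule.map_subtype_top]
  · rw [finrank_eq_card_basis B, Fintype.card_fin]
end

section
/- In ℂ[x,y,z] the following identity of ideals holds: (xyz, G_x, G_y, G_z) = (xy, yz, zx) ∩ (x, yz(y^m + (−1)^{m+1} z^m)) ∩ (y, xz(z^m + (−1)^{m+1} x^m)) ∩ (z, xy(x^m + (−1)^{m+1} y^m)). -/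
open MvPolynomial

/-- `G_x = yz(yᵐ − (−z)ᵐ)`. -/
noncomputable def Gx (m : ℕ) : MvPolynomial (Fin 3) ℂ :=
  X 1 * X 2 * ((X 1) ^ m - (-(X 2)) ^ m)

/-- `G_y = zx(zᵐ − (−x)ᵐ)`. -/
noncomputable def Gy (m : ℕ) : MvPolynomial (Fin 3) ℂ :=
  X 2 * X 0 * ((X 2) ^ m - (-(X 0)) ^ m)

/-- `G_z = xy(xᵐ − (−y)ᵐ)`. -/
noncomputable def Gz (m : ℕ) : MvPolynomial (Fin 3) ℂ :=
  X 0 * X 1 * ((X 0) ^ m - (-(X 1)) ^ m)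

/-! Let `I = (x)`, `J = (y)`, `K = (z)`. Each of `G_x`, `G_y`, `G_z` lies in two of these ideals and
is adjoined to the third, so the modular law pulls all three out of `(I + (G_x)) ∩ (J + (G_y)) ∩
(K + (G_z))` and leaves `I ∩ J ∩ K = (xyz)`. The component `(xy, yz, zx)` is redundant in the
intersection, because it contains `xyz`, `G_x`, `G_y` and `G_z`. -/

section ModularLattice

variable {α : Type*} [Lattice α] [IsModularLattice α] {I J K P Q S : α}

theorem sup_inf_sup_eq_of_le_of_le (hP : P ≤ J) (hQ : Q ≤ I) :
    (I ⊔ P) ⊓ (J ⊔ Q) = I ⊓ J ⊔ (P ⊔ Q) :=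
  calc
    (I ⊔ P) ⊓ (J ⊔ Q) = P ⊔ I ⊓ (J ⊔ Q) := by
      rw [sup_comm I, sup_inf_assoc_of_le I (hP.trans le_sup_left)]
    _ = P ⊔ (I ⊓ J ⊔ Q) := by rw [inf_sup_assoc_of_le J hQ]
    _ = I ⊓ J ⊔ (P ⊔ Q) := sup_left_comm _ _ _

theorem sup_inf_sup_inf_sup_eq_of_le_inf (hP : P ≤ J ⊓ K) (hQ : Q ≤ I ⊓ K) (hS : S ≤ I ⊓ J) :
    (I ⊔ P) ⊓ (J ⊔ Q) ⊓ (K ⊔ S) = I ⊓ J ⊓ K ⊔ (P ⊔ Q ⊔ S) := by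
  rw [le_inf_iff] at hP hQ
  rw [sup_inf_sup_eq_of_le_of_le hP.1 hQ.1, sup_inf_sup_eq_of_le_of_le (sup_le hP.2 hQ.2) hS]

end ModularLattice

theorem span_quadruple_le_span_pairwise_mul {R : Type*} [CommSemiring R] {x y z : R}
    (f g h : R) :
    Ideal.span {x * y * z, y * z * f, z * x * g, x * y * h} ≤
      Ideal.span {x * y, y * z, z * x} := by
  have hxy : x * y ∈ Ideal.span {x * y, y * z, z * x} := Ideal.subset_span (by simp)
  have hyz : y * z ∈ Ideal.span {x * y, y * z, z * x} := Ideal.subset_span (by simp)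
  have hzx : z * x ∈ Ideal.span {x * y, y * z, z * x} := Ideal.subset_span (by simp)
  simp only [Ideal.span_le, Set.insert_subset_iff, Set.singleton_subset_iff, SetLike.mem_coe]
  exact ⟨Ideal.mul_mem_right _ _ hxy, Ideal.mul_mem_right _ _ hyz, Ideal.mul_mem_right _ _ hzx,
    Ideal.mul_mem_right _ _ hxy⟩

section CommRing

variable {R : Type*} [CommRing R]

theorem span_pair_inf_span_pair_inf_span_pair {x y z : R}
    (hxyz : Ideal.span {x} ⊓ Ideal.span {y} ⊓ Ideal.span {z} = Ideal.span {x * y * z})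
    (f g h : R) :
    Ideal.span {x, y * z * f} ⊓ Ideal.span {y, x * z * g} ⊓ Ideal.span {z, x * y * h} =
      Ideal.span {x * y * z, y * z * f, z * x * g, x * y * h} := by
  have span_mul_le_inf (a b c : R) : Ideal.span {a * b * c} ≤ Ideal.span {a} ⊓ Ideal.span {b} := by
    rw [le_inf_iff, Ideal.span_singleton_le_span_singleton, Ideal.span_singleton_le_span_singleton]
    exact ⟨⟨b * c, by ring⟩, ⟨a * c, by ring⟩⟩
  simp only [Ideal.span_insert]
  rw [sup_inf_sup_inf_sup_eq_of_le_inf (span_mul_le_inf y z f) (span_mul_le_inf x z g)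
    (span_mul_le_inf x y h), hxyz, sup_assoc, mul_comm z x]

theorem pow_sub_neg_pow (a b : R) (m : ℕ) : a ^ m - (-b) ^ m = a ^ m + (-1) ^ (m + 1) * b ^ m := by
  rw [neg_pow b m]
  ring

end CommRing

section MonomialIdeals

variable {σ R : Type*} [CommSemiring R]

theorem mem_span_monomial_one_iff {s : σ →₀ ℕ} {p : MvPolynomial σ R} :
    p ∈ Ideal.span {monomial s (1 : R)} ↔ ∀ d ∈ p.support, s ≤ d := by
  simpa using mem_ideal_span_monomial_image (x := p) (s := {s})

theorem span_monomial_one_inf_span_monomial_one (s t : σ →₀ ℕ) :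
    Ideal.span {monomial s (1 : R)} ⊓ Ideal.span {monomial t 1} =
      Ideal.span {monomial (s ⊔ t) 1} := by
  ext p
  simp only [Ideal.mem_inf, mem_span_monomial_one_iff, sup_le_iff, forall₂_and]

theorem span_X_inf_span_X_inf_span_X {i j k : σ} (hij : i ≠ j) (hik : i ≠ k) (hjk : j ≠ k) :
    Ideal.span {(X i : MvPolynomial σ R)} ⊓ Ideal.span {X j} ⊓ Ideal.span {X k} =
      Ideal.span {X i * X j * X k} := by
  have lcm_eq_prod : Finsupp.single i 1 ⊔ Finsupp.single j 1 ⊔ Finsupp.single k 1 =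
      (Finsupp.single i 1 + Finsupp.single j 1 + Finsupp.single k 1 : σ →₀ ℕ) := by
    classical
    ext l
    simp only [Finsupp.sup_apply, Finsupp.add_apply, Finsupp.single_apply]
    grind
  simp only [X, span_monomial_one_inf_span_monomial_one, monomial_mul, mul_one, lcm_eq_prod]

end MonomialIdeals

theorem Fermat_ideal_intersection_general {σ R : Type*} [CommRing R] {i j k : σ}
    (hij : i ≠ j) (hik : i ≠ k) (hjk : j ≠ k) (f g h : MvPolynomial σ R) :
    Ideal.span {X i * X j * X k, X j * X k * f, X k * X i * g, X i * X j * h} =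
      Ideal.span {X i * X j, X j * X k, X k * X i} ⊓
      Ideal.span {X i, X j * X k * f} ⊓
      Ideal.span {X j, X i * X k * g} ⊓
      Ideal.span {X k, X i * X j * h} := by
  have inf_X := span_X_inf_span_X_inf_span_X (R := R) hij hik hjk
  rw [inf_assoc, inf_assoc, ← inf_assoc (Ideal.span {X i, _}),
    span_pair_inf_span_pair_inf_span_pair inf_X f g h]
  exact (inf_eq_right.mpr (span_quadruple_le_span_pairwise_mul f g h)).symm

/-- In `ℂ[x,y,z]` the ideal `(xyz, G_x, G_y, G_z)` equals the intersection
`(xy,yz,zx) ∩ (x, yz(yᵐ + (−1)^{m+1} zᵐ)) ∩ (y, xz(zᵐ + (−1)^{m+1} xᵐ)) ∩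
(z, xy(xᵐ + (−1)^{m+1} yᵐ))`. -/
theorem Fermat_ideal_intersection (m : ℕ) (hm : 2 ≤ m) :
    Ideal.span {X 0 * X 1 * X 2, Gx m, Gy m, Gz m} =
      Ideal.span {X 0 * X 1, X 1 * X 2, X 2 * X 0} ⊓
      Ideal.span {(X 0 : MvPolynomial (Fin 3) ℂ),
        X 1 * X 2 * ((X 1) ^ m + (-1) ^ (m+1) * (X 2) ^ m)} ⊓
      Ideal.span {(X 1 : MvPolynomial (Fin 3) ℂ),
        X 0 * X 2 * ((X 2) ^ m + (-1) ^ (m+1) * (X 0) ^ m)} ⊓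
      Ideal.span {(X 2 : MvPolynomial (Fin 3) ℂ),
        X 0 * X 1 * ((X 0) ^ m + (-1) ^ (m+1) * (X 1) ^ m)} := by
  simp only [Gx, Gy, Gz, pow_sub_neg_pow]
  exact Fermat_ideal_intersection_general (by decide) (by decide) (by decide) _ _ _
end

section
/- A vector v ∈ ℂ³ satisfies (xyz)(v) = G_x(v) = G_y(v) = G_z(v) = 0 if and only if v is a scalar multiple of one of the 3m+3 points of Z(F_{m,3}); equivalently, the common zero locus in ℂ³ of all homogeneous polynomials of degree m+2 vanishing on Z(F_{m,3}) is exactly the union of the 3m+3 lines through the origin spanned by the points of Z(F_{m,3}) (so the corresponding linear system on the blow-up is base point free). -/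
/-- The augmented Fermat configuration `Z(F_{m,3})` of `3m+3` points. -/
def Zm3 (m : ℕ) : Set (Fin 3 → ℂ) :=
  {![1,0,0], ![0,1,0], ![0,0,1]} ∪
    {v | ∃ l : ℂ, l ^ m = (-1) ^ m ∧ (v = ![1,l,0] ∨ v = ![0,1,l] ∨ v = ![l,0,1])}

/-!
The base locus is a cone contained in the union of the three coordinate planes, and on the plane
`v i = 0` two of the three forms vanish identically. The third is a binary form in the remaining two
coordinates, so on that plane the locus is a union of lines. Off the two axes, rescaling the
coordinate `i + 1` to `1` turns the equation into `(-λ)^m = 1`, that is, `λ^m = (-1)^m`.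
-/

/-- The binary form `ab(a^m - (-b)^m)`: the polynomials `G_x`, `G_y`, `G_z` are its values at
`(y, z)`, `(z, x)`, `(x, y)`. -/
def fermatForm {R : Type*} [CommRing R] (m : ℕ) (a b : R) : R :=
  a * b * (a ^ m - (-b) ^ m)

/-- The configuration `Z(F_{m,3})` over an arbitrary ring. Coordinates are indexed cyclically, so
that `G_x`, `G_y`, `G_z` are treated alike: besides the coordinate points it consists of the points
with coordinates `0, 1, λ` at `i, i + 1, i + 2`, where `λ^m = (-1)^m`. -/
def fermatConfiguration (R : Type*) [Ring R] (m : ℕ) : Set (Fin 3 → R) :=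
  {p | ∃ i, p = Pi.single i 1 ∨ p i = 0 ∧ p (i + 1) = 1 ∧ p (i + 2) ^ m = (-1) ^ m}

theorem forall_fin_three_iff_cyclic {P : Fin 3 → Prop} (i : Fin 3) :
    (∀ j, P j) ↔ P i ∧ P (i + 1) ∧ P (i + 2) := by
  refine ⟨fun h ↦ ⟨h _, h _, h _⟩, fun ⟨h0, h1, h2⟩ j ↦ ?_⟩
  obtain rfl | rfl | rfl : j = i ∨ j = i + 1 ∨ j = i + 2 := by grind
  exacts [h0, h1, h2]

theorem eq_smul_single_of_forall_ne {ι R : Type*} [DecidableEq ι] [MulZeroOneClass R] {v : ι → R}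
    {i : ι} (h : ∀ j ≠ i, v j = 0) : v = v i • Pi.single i 1 := by
  ext j
  obtain rfl | hj := eq_or_ne j i <;> simp [*]

theorem neg_pow_eq_one_iff {M : Type*} [Monoid M] [HasDistribNeg M] {a : M} {n : ℕ} :
    (-a) ^ n = 1 ↔ a ^ n = (-1) ^ n := by
  rw [neg_pow]
  obtain h | h := neg_one_pow_eq_or M n <;> simp [h, neg_eq_iff_eq_neg]

theorem Zm3_eq_fermatConfiguration (m : ℕ) : Zm3 m = fermatConfiguration ℂ m := by
  ext p
  constructor
  · rintro ((rfl | rfl | rfl) | ⟨l, hl, rfl | rfl | rfl⟩)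
    · exact ⟨0, .inl (by simp [funext_iff, Fin.forall_fin_succ])⟩
    · exact ⟨1, .inl (by simp [funext_iff, Fin.forall_fin_succ])⟩
    · exact ⟨2, .inl (by simp [funext_iff, Fin.forall_fin_succ])⟩
    · exact ⟨2, .inr ⟨rfl, rfl, hl⟩⟩
    · exact ⟨0, .inr ⟨rfl, rfl, hl⟩⟩
    · exact ⟨1, .inr ⟨rfl, rfl, hl⟩⟩
  · rintro ⟨i, rfl | ⟨h0, h1, h2⟩⟩
    · left
      fin_cases i <;> simp [funext_iff, Fin.forall_fin_succ]
    · refine .inr ⟨p (i + 2), h2, ?_⟩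
      fin_cases i <;> simp_all [funext_iff, Fin.forall_fin_succ]

section CommRing

variable {R : Type*} [CommRing R] {m : ℕ}

theorem fermatForm_zero_left (b : R) : fermatForm m 0 b = 0 := by simp [fermatForm]

theorem fermatForm_zero_right (a : R) : fermatForm m a 0 = 0 := by simp [fermatForm]

theorem fermatForm_mul_mul (t a b : R) :
    fermatForm m (t * a) (t * b) = t ^ (m + 2) * fermatForm m a b := by
  simp only [fermatForm, ← mul_neg, mul_pow]
  ring

theorem fermatForm_one_left_of_pow_eq {l : R} (hl : l ^ m = (-1) ^ m) : fermatForm m 1 l = 0 := by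
  rw [fermatForm, one_pow, neg_pow_eq_one_iff.mpr hl, sub_self, mul_zero]

theorem pow_eq_of_fermatForm_one_left_eq_zero [NoZeroDivisors R] {l : R} (hl : l ≠ 0)
    (h : fermatForm m 1 l = 0) : l ^ m = (-1) ^ m := by
  rw [fermatForm, one_mul, one_pow] at h
  exact neg_pow_eq_one_iff.mp (sub_eq_zero.mp ((mul_eq_zero.mp h).resolve_left hl)).symm

theorem prod_eq_zero_and_forall_fermatForm_eq_zero_iff [IsDomain R] {v : Fin 3 → R} :
    (∏ i, v i = 0 ∧ ∀ i, fermatForm m (v (i + 1)) (v (i + 2)) = 0) ↔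
      ∃ i, v i = 0 ∧ fermatForm m (v (i + 1)) (v (i + 2)) = 0 := by
  simp only [Finset.prod_eq_zero_iff, Finset.mem_univ, true_and]
  refine ⟨fun ⟨⟨i, hi⟩, hG⟩ ↦ ⟨i, hi, hG i⟩, fun ⟨i, hi, hG⟩ ↦ ⟨⟨i, hi⟩, ?_⟩⟩
  have h12 : i + 1 + 2 = i := by grind
  have h21 : i + 2 + 1 = i := by grind
  exact (forall_fin_three_iff_cyclic i).mpr
    ⟨hG, by rw [h12, hi, fermatForm_zero_right], by rw [h21, hi, fermatForm_zero_left]⟩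

theorem exists_fermatForm_eq_zero_of_mem_fermatConfiguration {p : Fin 3 → R}
    (hp : p ∈ fermatConfiguration R m) :
    ∃ i, p i = 0 ∧ fermatForm m (p (i + 1)) (p (i + 2)) = 0 := by
  obtain ⟨i, rfl | ⟨h0, h1, h2⟩⟩ := hp
  · refine ⟨i + 1, Pi.single_eq_of_ne (by grind) 1, ?_⟩
    rw [Pi.single_eq_of_ne (by grind), fermatForm_zero_left]
  · exact ⟨i, h0, by rw [h1, fermatForm_one_left_of_pow_eq h2]⟩

end CommRing

theorem exists_mem_fermatConfiguration_eq_smul {K : Type*} [Field K] {m : ℕ} {v : Fin 3 → K}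
    {i : Fin 3} (h0 : v i = 0) (hG : fermatForm m (v (i + 1)) (v (i + 2)) = 0) :
    ∃ p ∈ fermatConfiguration K m, ∃ t : K, v = t • p := by
  by_cases h1 : v (i + 1) = 0
  · refine ⟨_, ⟨i + 2, .inl rfl⟩, v (i + 2), eq_smul_single_of_forall_ne ?_⟩
    exact (forall_fin_three_iff_cyclic i).mpr ⟨fun _ ↦ h0, fun _ ↦ h1, fun h ↦ (h rfl).elim⟩
  by_cases h2 : v (i + 2) = 0
  · refine ⟨_, ⟨i + 1, .inl rfl⟩, v (i + 1), eq_smul_single_of_forall_ne ?_⟩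
    exact (forall_fin_three_iff_cyclic i).mpr ⟨fun _ ↦ h0, fun h ↦ (h rfl).elim, fun _ ↦ h2⟩
  have hG_ratio : fermatForm m 1 ((v (i + 1))⁻¹ * v (i + 2)) = 0 := by
    rw [← inv_mul_cancel₀ h1, fermatForm_mul_mul, hG, mul_zero]
  have h_ratio : ((v (i + 1))⁻¹ * v (i + 2)) ^ m = (-1) ^ m :=
    pow_eq_of_fermatForm_one_left_eq_zero (mul_ne_zero (inv_ne_zero h1) h2) hG_ratio
  exact ⟨(v (i + 1))⁻¹ • v, ⟨i, .inr ⟨by simp [h0], inv_mul_cancel₀ h1, h_ratio⟩⟩, v (i + 1),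
    (smul_inv_smul₀ h1 v).symm⟩

theorem Fermat_base_locus_general {K : Type*} [Field K] (m : ℕ) (v : Fin 3 → K) :
    (∏ i, v i = 0 ∧ ∀ i, fermatForm m (v (i + 1)) (v (i + 2)) = 0) ↔
      ∃ p ∈ fermatConfiguration K m, ∃ t : K, v = t • p := by
  rw [prod_eq_zero_and_forall_fermatForm_eq_zero_iff]
  constructor
  · rintro ⟨i, h0, hG⟩
    exact exists_mem_fermatConfiguration_eq_smul h0 hG
  · rintro ⟨p, hp, t, rfl⟩
    obtain ⟨i, h0, hG⟩ := exists_fermatForm_eq_zero_of_mem_fermatConfiguration hp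
    refine ⟨i, by simp [h0], ?_⟩
    simp only [Pi.smul_apply, smul_eq_mul, fermatForm_mul_mul, hG, mul_zero]

/-- A vector `v ∈ ℂ³` satisfies `(xyz)(v) = G_x(v) = G_y(v) = G_z(v) = 0` if and only if `v`
is a scalar multiple of one of the `3m+3` points of `Z(F_{m,3})`; i.e. the common zero locus
of `xyz, G_x, G_y, G_z` is the union of the `3m+3` lines spanned by the points of
`Z(F_{m,3})` (so the corresponding linear system on the blow-up is base point free). -/
theorem Fermat_base_locus (m : ℕ) (hm : 2 ≤ m) (v : Fin 3 → ℂ) :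
    (v 0 * v 1 * v 2 = 0 ∧
     v 1 * v 2 * ((v 1) ^ m - (-(v 2)) ^ m) = 0 ∧
     v 2 * v 0 * ((v 2) ^ m - (-(v 0)) ^ m) = 0 ∧
     v 0 * v 1 * ((v 0) ^ m - (-(v 1)) ^ m) = 0) ↔
    ∃ p ∈ Zm3 m, ∃ t : ℂ, v = t • p := by
  rw [Zm3_eq_fermatConfiguration, ← Fermat_base_locus_general, Fin.prod_univ_three,
    forall_fin_three_iff_cyclic 0]
  rfl
end
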